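/- arXiv:1210.1597 — 2 statements merged into one kernel-verified Lean document; each statement's English description precedes it below -/
import Mathlib

section
/- Let H be a torsion-free Hopf algebra over C[q,q⁻¹], and let H' := { a ∈ H | δ_n(a) ∈ (q−1)ⁿ H^{⊗n} for all n ∈ ℕ }, where δ_n = (id−ε)^{⊗n}∘Δⁿ. Let C_q ⊆ H be a unital subalgebra and left coideal, and define C_q^Lsh := { x ∈ C_q | δ_n(x) ∈ (q−1)ⁿ H^{⊗(n−1)} ⊗ C_q for all n ≥ 1 }. Then C_q^Lsh is a unital subalgebra of H'. -/
/- STATEMENT 11: the Drinfeld-type transform C_q^Lsh of a left coideal subalgebra C_q of a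
   torsion-free Hopf algebra H over ℂ[q,q⁻¹] is a unital subalgebra of H'. -/

open scoped TensorProduct
open PiTensorProduct

namespace GQDP

/-- The ground ring `ℂ[q,q⁻¹]` of complex Laurent polynomials. -/
abbrev R : Type := LaurentPolynomial ℂ

/-- The indeterminate `q`. -/
noncomputable def q : R := LaurentPolynomial.T 1

variable (H : Type*) [Ring H] [HopfAlgebra R H] [NoZeroSMulDivisors R H]

/-- The `n`-fold tensor power `H^{⊗n}`. -/
abbrev TP (n : ℕ) := ⨂[R] (_ : Fin n), H

/-- The "tensor product" of two `R`-submodules of `H` inside `H ⊗[R] H`. -/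
noncomputable def tsub (A B : Submodule R H) : Submodule R (H ⊗[R] H) :=
  Submodule.span R {z | ∃ a ∈ A, ∃ b ∈ B, z = a ⊗ₜ[R] b}

/-- The "tensor product" of a family of submodules `p i ⊆ H` inside `H^{⊗n}`: the additive
    subgroup generated by the pure tensors with `i`-th entry in `p i` (for `n ≥ 1` this
    coincides with the `R`-span of such pure tensors). -/
noncomputable def tgrp {n : ℕ} (p : Fin n → Submodule R H) : AddSubgroup (TP H n) :=
  AddSubgroup.closure {z | ∃ f : Fin n → H, (∀ i, f i ∈ p i) ∧ z = PiTensorProduct.tprod R f}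

/-- The canonical map `H ⊗ H^{⊗n} → H^{⊗(n+1)}`. -/
noncomputable def step (n : ℕ) : (H ⊗[R] TP H n) →ₗ[R] TP H (n + 1) :=
  ((PiTensorProduct.reindex R (fun _ : Fin 1 ⊕ Fin n => H)
      (finSumFinEquiv.trans (finCongr (Nat.add_comm 1 n)))).toLinearMap
    ∘ₗ (PiTensorProduct.tmulEquiv (ι := Fin 1) (ι₂ := Fin n) R H).toLinearMap)
    ∘ₗ (LinearMap.rTensor (TP H n)
      (PiTensorProduct.subsingletonEquiv (0 : Fin 1) : (⨂[R] (_ : Fin 1), H) ≃ₗ[R] H).symm.toLinearMap)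

/-- The iterated coproduct `Δⁿ : H → H^{⊗n}`, with `Δ⁰ := ε` and `Δ^{n+1} := (id ⊗ Δⁿ) ∘ Δ`. -/
noncomputable def DeltaIter : (n : ℕ) → H →ₗ[R] TP H n
  | 0 => (PiTensorProduct.isEmptyEquiv (ι := Fin 0)).symm.toLinearMap
          ∘ₗ (Coalgebra.counit : H →ₗ[R] R)
  | n + 1 => step H n ∘ₗ LinearMap.lTensor H (DeltaIter n)
              ∘ₗ (Coalgebra.comul : H →ₗ[R] H ⊗[R] H)

/-- `δ_n := (id − η∘ε)^{⊗n} ∘ Δⁿ : H → H^{⊗n}`. -/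
noncomputable def deltaN (n : ℕ) : H →ₗ[R] TP H n :=
  (PiTensorProduct.map fun _ =>
      (LinearMap.id : H →ₗ[R] H) - Algebra.linearMap R H ∘ₗ (Coalgebra.counit : H →ₗ[R] R))
    ∘ₗ DeltaIter H n

/-- Drinfeld's subalgebra `H' = { a ∈ H | δ_n(a) ∈ (q−1)ⁿ H^{⊗n} for all n }`. -/
noncomputable def Hprime : Set H :=
  {a | ∀ n : ℕ, ∃ y : TP H n, deltaN H n a = ((q - 1) ^ n) • y}

/-- The Drinfeld-type transform `C^Lsh := { x ∈ C | δ_n(x) ∈ (q−1)ⁿ H^{⊗(n−1)} ⊗ C, ∀ n ≥ 1 }`. -/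
noncomputable def Lsh (C : Submodule R H) : Set H :=
  {x | x ∈ C ∧ ∀ n : ℕ,
    ∃ y ∈ tgrp H (fun i : Fin (n + 1) => if i = Fin.last n then C else ⊤),
      deltaN H (n + 1) x = ((q - 1) ^ (n + 1)) • y}

/-! Write `id = p + e` with `e = η ∘ ε` and expand: `Δⁿ x = ∑_S δ_S x`, where `δ_S` has `p` in
the factors `S ⊆ {1, …, n}` and `e` in the others. As `Δⁿ` is multiplicative, and as `p` fixes
`ker ε` and kills the scalars, `p^{⊗n}` fixes `δ_S x * δ_T y` if `S ∪ T = {1, …, n}` and kills it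
otherwise, so `δ_n (x * y) = ∑_{S ∪ T = {1, …, n}} δ_S x * δ_T y`. By the counit axiom, `δ_S x` is
`δ_{|S|} x` with factors `1` inserted outside `S`; for `x` in the transform of `C` it therefore
lies in `(q-1)^{|S|} H^{⊗(n-1)} ⊗ C`. This set is stable under inserting a `1` because `C` is
unital, and `H^{⊗(n-1)} ⊗ C` is a subalgebra because `C` is. Since `n ≤ |S| + |T|`, every summand
is divisible by `(q-1)ⁿ`. -/

section TensorSubalgebra

variable {ι K : Type*} {B : ι → Type*} [CommSemiring K] [∀ i, Semiring (B i)]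
  [∀ i, Algebra K (B i)]

/-- The tensor product of subalgebras `S i ⊆ B i`, as a subalgebra of `⨂ B i`: the image of
`⨂ S i`, which need not be isomorphic to it as nothing is assumed flat. -/
noncomputable def tensorSubalgebra (S : ∀ i, Subalgebra K (B i)) : Subalgebra K (⨂[K] i, B i) :=
  Algebra.adjoin K (PiTensorProduct.tprod K '' {f | ∀ i, f i ∈ S i})

theorem tprod_mem_tensorSubalgebra {S : ∀ i, Subalgebra K (B i)} {f : ∀ i, B i}
    (hf : ∀ i, f i ∈ S i) : PiTensorProduct.tprod K f ∈ tensorSubalgebra S :=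
  Algebra.subset_adjoin ⟨f, hf, rfl⟩

theorem toSubmodule_tensorSubalgebra (S : ∀ i, Subalgebra K (B i)) :
    Subalgebra.toSubmodule (tensorSubalgebra S) =
      Submodule.span K (PiTensorProduct.tprod K '' {f | ∀ i, f i ∈ S i}) := by
  let M : Submonoid (⨂[K] i, B i) :=
    (Submonoid.pi Set.univ fun i => (S i).toSubmonoid).map (tprodMonoidHom K)
  have hM : PiTensorProduct.tprod K '' {f | ∀ i, f i ∈ S i} = M := by
    ext z
    simp [M, Submonoid.mem_pi]
  rw [tensorSubalgebra, Algebra.adjoin_eq_span, hM, Submonoid.closure_eq]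

theorem tensorSubalgebra_eq_top_of_isEmpty [IsEmpty ι] (S : ∀ i, Subalgebra K (B i)) :
    tensorSubalgebra S = ⊤ := by
  rw [← Algebra.toSubmodule_eq_top, toSubmodule_tensorSubalgebra, ← span_tprod_eq_top]
  congr 1
  ext z
  simp

end TensorSubalgebra

section Concatenation

variable {ι₁ ι₂ κ K M : Type*} [CommSemiring K] [AddCommMonoid M] [Module K M]

theorem reindex_tmulEquiv_tprod (e : ι₁ ⊕ ι₂ ≃ κ) (a : ι₁ → M) (b : ι₂ → M) :
    reindex K (fun _ => M) e
        (tmulEquiv K M (PiTensorProduct.tprod K a ⊗ₜ[K] PiTensorProduct.tprod K b)) =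
      PiTensorProduct.tprod K (Sum.elim a b ∘ e.symm) := by
  rw [tmulEquiv_apply, reindex_tprod]
  rfl

end Concatenation

section InsertOne

variable {K B : Type*} [CommSemiring K] [Semiring B] [Algebra K B] {n : ℕ}

/-- The map `B^{⊗n} → B^{⊗(n+1)}` inserting the tensor factor `1` at position `i`. -/
noncomputable def insertOne (i : Fin (n + 1)) :
    (⨂[K] (_ : Fin n), B) →ₗ[K] ⨂[K] (_ : Fin (n + 1)), B :=
  lift (MultilinearMap.curryMid (M := fun _ => B) i (PiTensorProduct.tprod K) 1)

@[simp]
theorem insertOne_tprod (i : Fin (n + 1)) (f : Fin n → B) :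
    insertOne i (PiTensorProduct.tprod K f) =
      PiTensorProduct.tprod K (i.insertNth 1 f : Fin (n + 1) → B) := by
  simp [insertOne]

theorem insertOne_one (i : Fin (n + 1)) : insertOne i (1 : ⨂[K] (_ : Fin n), B) = 1 := by
  have hone : (i.insertNth 1 1 : Fin (n + 1) → B) = 1 :=
    funext ((Fin.forall_iff_succAbove i).2 ⟨by simp, fun j => by simp⟩)
  rw [one_def, insertOne_tprod, hone, one_def]

theorem insertOne_mem_tensorSubalgebra {i : Fin (n + 1)} {S : Fin n → Subalgebra K B}
    {T : Fin (n + 1) → Subalgebra K B} (hST : ∀ j, S j ≤ T (i.succAbove j))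
    {z : ⨂[K] (_ : Fin n), B} (hz : z ∈ tensorSubalgebra S) :
    insertOne i z ∈ tensorSubalgebra T := by
  suffices h : Subalgebra.toSubmodule (tensorSubalgebra S) ≤
      (Subalgebra.toSubmodule (tensorSubalgebra T)).comap (insertOne i) from h hz
  rw [toSubmodule_tensorSubalgebra, Submodule.span_le]
  rintro _ ⟨f, hf, rfl⟩
  have hf' : ∀ j, (i.insertNth 1 f : Fin (n + 1) → B) j ∈ T j :=
    (Fin.forall_iff_succAbove i).2 ⟨by simp, fun j => by simpa using hST j (hf j)⟩
  simpa using tprod_mem_tensorSubalgebra hf'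

end InsertOne

section AugmentationSplitting

variable (K B : Type*) [CommRing K] [Ring B] [Bialgebra K B]

/-- The projection `η ∘ ε` of a bialgebra onto its scalars. -/
noncomputable def constPart : B →ₗ[K] B :=
  Algebra.linearMap K B ∘ₗ Coalgebra.counit

/-- The projection `id - η ∘ ε` of a bialgebra onto its augmentation ideal `ker ε`. -/
noncomputable def augPart : B →ₗ[K] B :=
  LinearMap.id - constPart K B

theorem augPart_add_constPart : augPart K B + constPart K B = LinearMap.id :=
  sub_add_cancel _ _

variable {K B}

theorem counit_augPart (a : B) : Coalgebra.counit (R := K) (augPart K B a) = 0 := by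
  simp [augPart, constPart]

theorem augPart_of_counit_eq_zero {a : B} (ha : Coalgebra.counit (R := K) a = 0) :
    augPart K B a = a := by
  simp [augPart, constPart, ha]

theorem augPart_constPart_mul_constPart (a b : B) :
    augPart K B (constPart K B a * constPart K B b) = 0 := by
  simp [augPart, constPart]

variable {ι : Type*} [DecidableEq ι]

variable (K B) in
/-- The family of projections with `id - η ∘ ε` at the indices in `S` and `η ∘ ε` elsewhere. -/
noncomputable def augPartOn (S : Finset ι) : ι → B →ₗ[K] B :=
  S.piecewise (fun _ => augPart K B) (fun _ => constPart K B)

theorem augPartOn_of_mem {S : Finset ι} {i : ι} (hi : i ∈ S) :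
    augPartOn K B S i = augPart K B :=
  S.piecewise_eq_of_mem _ _ hi

theorem augPartOn_of_notMem {S : Finset ι} {i : ι} (hi : i ∉ S) :
    augPartOn K B S i = constPart K B :=
  S.piecewise_eq_of_notMem _ _ hi

theorem augPart_augPartOn_mul_of_mem_union {S T : Finset ι} {i : ι} (hi : i ∈ S ∪ T) (a b : B) :
    augPart K B (augPartOn K B S i a * augPartOn K B T i b) =
      augPartOn K B S i a * augPartOn K B T i b := by
  apply augPart_of_counit_eq_zero
  rcases Finset.mem_union.1 hi with hi | hi <;>
    simp [Bialgebra.counit_mul, augPartOn_of_mem hi, counit_augPart]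

theorem augPart_augPartOn_mul_of_notMem_union {S T : Finset ι} {i : ι} (hi : i ∉ S ∪ T)
    (a b : B) : augPart K B (augPartOn K B S i a * augPartOn K B T i b) = 0 := by
  rw [Finset.notMem_union] at hi
  rw [augPartOn_of_notMem hi.1, augPartOn_of_notMem hi.2, augPart_constPart_mul_constPart]

theorem map_augPart_mul_of_union_eq_univ [Fintype ι] {S T : Finset ι}
    (hST : S ∪ T = Finset.univ) (X Y : ⨂[K] (_ : ι), B) :
    PiTensorProduct.map (fun _ => augPart K B)
        (PiTensorProduct.map (augPartOn K B S) X * PiTensorProduct.map (augPartOn K B T) Y) =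
      PiTensorProduct.map (augPartOn K B S) X * PiTensorProduct.map (augPartOn K B T) Y := by
  have hmem (i : ι) : i ∈ S ∪ T := hST ▸ Finset.mem_univ i
  let β := (LinearMap.mul K (⨂[K] (_ : ι), B)).compl₁₂
    (PiTensorProduct.map (augPartOn K B S)) (PiTensorProduct.map (augPartOn K B T))
  suffices h : β.compr₂ (PiTensorProduct.map fun _ => augPart K B) = β from
    LinearMap.congr_fun₂ h X Y
  ext f g
  simp [β, augPart_augPartOn_mul_of_mem_union (hmem _), Pi.mul_def]

theorem map_augPart_mul_of_union_ne_univ [Fintype ι] {S T : Finset ι}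
    (hST : S ∪ T ≠ Finset.univ) (X Y : ⨂[K] (_ : ι), B) :
    PiTensorProduct.map (fun _ => augPart K B)
      (PiTensorProduct.map (augPartOn K B S) X * PiTensorProduct.map (augPartOn K B T) Y) = 0 := by
  obtain ⟨i, hi⟩ : ∃ i, i ∉ S ∪ T := by simpa [Finset.eq_univ_iff_forall] using hST
  let β := (LinearMap.mul K (⨂[K] (_ : ι), B)).compl₁₂
    (PiTensorProduct.map (augPartOn K B S)) (PiTensorProduct.map (augPartOn K B T))
  suffices h : β.compr₂ (PiTensorProduct.map fun _ => augPart K B) = 0 from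
    LinearMap.congr_fun₂ h X Y
  ext f g
  simpa [β] using MultilinearMap.map_coord_zero (PiTensorProduct.tprod K) i
    (augPart_augPartOn_mul_of_notMem_union hi (f i) (g i))

theorem sum_map_augPartOn [Fintype ι] (X : ⨂[K] (_ : ι), B) :
    ∑ S : Finset ι, PiTensorProduct.map (augPartOn K B S) X = X := by
  have h := (mapMultilinear K (fun _ : ι => B) (fun _ : ι => B)).map_add_univ
    (fun _ => augPart K B) (fun _ => constPart K B)
  have hid : (fun _ : ι => augPart K B) + (fun _ : ι => constPart K B) =
      fun _ => LinearMap.id := funext fun _ => augPart_add_constPart K B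
  simp only [hid, mapMultilinear_apply, PiTensorProduct.map_id] at h
  simpa [augPartOn] using (LinearMap.congr_fun h X).symm

end AugmentationSplitting

section IteratedCoproduct

variable {A : Type*} [Ring A] [HopfAlgebra R A] {n : ℕ}

theorem step_tmul_tprod (a : A) (f : Fin n → A) :
    step A n (a ⊗ₜ[R] PiTensorProduct.tprod R f) =
      PiTensorProduct.tprod R (Fin.cons a f : Fin (n + 1) → A) := by
  have hshift : Sum.elim (fun _ => a) f ∘
      (finSumFinEquiv.trans (finCongr (Nat.add_comm 1 n))).symm = Fin.cons a f := by
    rw [Equiv.comp_symm_eq]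
    funext i
    rcases i with i | j
    · rw [Subsingleton.elim i 0]
      rfl
    · have hj : finSumFinEquiv.trans (finCongr (Nat.add_comm 1 n)) (Sum.inr j) = j.succ := by
        ext
        simp
      simp only [Function.comp_apply, hj, Sum.elim_inr, Fin.cons_succ]
  simp only [step, LinearMap.comp_apply, LinearMap.rTensor_tmul, LinearEquiv.coe_coe,
    subsingletonEquiv_symm_apply', reindex_tmulEquiv_tprod, hshift]

theorem step_mul_tmul_mul (a b : A) (x y : TP A n) :
    step A n ((a * b) ⊗ₜ[R] (x * y)) = step A n (a ⊗ₜ[R] x) * step A n (b ⊗ₜ[R] y) := by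
  let stepAt (c : A) : TP A n →ₗ[R] TP A (n + 1) := step A n ∘ₗ TensorProduct.mk R A (TP A n) c
  suffices h : (LinearMap.mul R (TP A n)).compr₂ (stepAt (a * b)) =
      (LinearMap.mul R (TP A (n + 1))).compl₁₂ (stepAt a) (stepAt b) from
    LinearMap.congr_fun₂ h x y
  ext f g
  have hcons : (Fin.cons (a * b) (f * g) : Fin (n + 1) → A) = Fin.cons a f * Fin.cons b g :=
    funext (Fin.cases rfl fun _ => rfl)
  simp [stepAt, step_tmul_tprod, hcons]

theorem step_one_tmul (z : TP A n) : step A n (1 ⊗ₜ[R] z) = insertOne 0 z := by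
  suffices h : step A n ∘ₗ TensorProduct.mk R A (TP A n) 1 = insertOne 0 from
    LinearMap.congr_fun h z
  ext f
  simp [step_tmul_tprod]

theorem step_tmul_insertOne (i : Fin (n + 1)) (a : A) (z : TP A n) :
    step A (n + 1) (a ⊗ₜ[R] insertOne i z) = insertOne i.succ (step A n (a ⊗ₜ[R] z)) := by
  suffices h : step A (n + 1) ∘ₗ TensorProduct.mk R A (TP A (n + 1)) a ∘ₗ insertOne i =
      insertOne i.succ ∘ₗ step A n ∘ₗ TensorProduct.mk R A (TP A n) a from
    LinearMap.congr_fun h z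
  ext f
  simp [step_tmul_tprod, Fin.insertNth_succ_cons]

theorem map_step_tmul_tprod (φ : Fin (n + 1) → A →ₗ[R] A) (a : A) (f : Fin n → A) :
    PiTensorProduct.map φ (step A n (a ⊗ₜ[R] PiTensorProduct.tprod R f)) =
      step A n (φ 0 a ⊗ₜ[R] PiTensorProduct.map (Fin.tail φ) (PiTensorProduct.tprod R f)) := by
  rw [step_tmul_tprod, map_tprod, map_tprod, step_tmul_tprod]
  congr 1
  exact funext (Fin.cases rfl fun _ => rfl)

theorem map_comp_step (φ : Fin (n + 1) → A →ₗ[R] A) :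
    PiTensorProduct.map φ ∘ₗ step A n =
      step A n ∘ₗ TensorProduct.map (φ 0) (PiTensorProduct.map (Fin.tail φ)) := by
  refine TensorProduct.ext' fun a z => ?_
  induction z using PiTensorProduct.induction_on with
  | smul_tprod r f => simpa using congrArg (r • ·) (map_step_tmul_tprod φ a f)
  | add x y hx hy => rw [TensorProduct.tmul_add, map_add, map_add, hx, hy]

theorem step_one_tmul_one : step A n (1 ⊗ₜ[R] 1) = 1 := by
  rw [step_one_tmul, insertOne_one]

variable (A) in
/-- The iterated coproduct `Δⁿ` as an algebra homomorphism; its underlying linear map is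
`DeltaIter`. -/
noncomputable def DeltaIterAlgHom : (n : ℕ) → A →ₐ[R] TP A n
  | 0 => (Algebra.ofId R (TP A 0)).comp (Bialgebra.counitAlgHom R A)
  | n + 1 =>
    (Algebra.TensorProduct.algHomOfLinearMapTensorProduct (step A n)
      (fun a b x y => step_mul_tmul_mul a b x y) step_one_tmul_one).comp
      ((Algebra.TensorProduct.map (AlgHom.id R A) (DeltaIterAlgHom n)).comp
        (Bialgebra.comulAlgHom R A))

theorem toLinearMap_DeltaIterAlgHom (n : ℕ) :
    (DeltaIterAlgHom A n).toLinearMap = DeltaIter A n := by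
  induction n with
  | zero =>
    have hone : (isEmptyEquiv (R := R) (s := fun _ => A) (Fin 0)).symm 1 = 1 :=
      (LinearEquiv.symm_apply_eq _).2 (isEmptyEquiv_apply_tprod (Fin 0) _).symm
    ext x
    rw [DeltaIter, LinearMap.comp_apply, LinearEquiv.coe_coe,
      ← mul_one (Coalgebra.counit (R := R) x), ← smul_eq_mul, map_smul, hone]
    exact Algebra.algebraMap_eq_smul_one (R := R) (A := TP A 0) _
  | succ n ih =>
    rw [DeltaIter, ← ih]
    rfl

theorem map_comp_DeltaIter_succ (φ : Fin (n + 1) → A →ₗ[R] A) :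
    PiTensorProduct.map φ ∘ₗ DeltaIter A (n + 1) =
      step A n ∘ₗ
        TensorProduct.map (φ 0) (PiTensorProduct.map (Fin.tail φ) ∘ₗ DeltaIter A n) ∘ₗ
          Coalgebra.comul := by
  rw [DeltaIter, ← LinearMap.comp_assoc, map_comp_step, LinearMap.comp_assoc,
    ← LinearMap.comp_assoc _ (LinearMap.lTensor _ _), LinearMap.map_comp_lTensor]

theorem map_comp_DeltaIter_eq_insertOne_zero (φ : Fin (n + 1) → A →ₗ[R] A)
    (h0 : φ 0 = constPart R A) :
    PiTensorProduct.map φ ∘ₗ DeltaIter A (n + 1) =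
      insertOne 0 ∘ₗ PiTensorProduct.map (Fin.tail φ) ∘ₗ DeltaIter A n := by
  rw [map_comp_DeltaIter_succ, h0, constPart, ← LinearMap.map_comp_rTensor,
    LinearMap.comp_assoc, Coalgebra.rTensor_counit_comp_comul]
  ext x
  simp [step_one_tmul]

theorem map_comp_DeltaIter_eq_insertOne (i : Fin (n + 1)) (φ : Fin (n + 1) → A →ₗ[R] A)
    (hi : φ i = constPart R A) :
    PiTensorProduct.map φ ∘ₗ DeltaIter A (n + 1) =
      insertOne i ∘ₗ PiTensorProduct.map (i.removeNth φ) ∘ₗ DeltaIter A n := by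
  induction n with
  | zero =>
    obtain rfl : i = 0 := Subsingleton.elim (α := Fin 1) i 0
    rw [map_comp_DeltaIter_eq_insertOne_zero φ hi, Fin.removeNth_zero]
  | succ n ih =>
    obtain rfl | ⟨j, rfl⟩ := i.eq_zero_or_eq_succ
    · rw [map_comp_DeltaIter_eq_insertOne_zero φ hi, Fin.removeNth_zero]
    · have hstep : step A (n + 1) ∘ₗ TensorProduct.map (φ 0) (insertOne j) =
          insertOne j.succ ∘ₗ step A n ∘ₗ (φ 0).rTensor (TP A n) :=
        TensorProduct.ext' fun a z => by simp [step_tmul_insertOne]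
      have htail : Fin.tail (j.succ.removeNth φ) = j.removeNth (Fin.tail φ) := by
        ext k : 1
        simp [Fin.tail, Fin.removeNth]
      have hhead : j.succ.removeNth φ 0 = φ 0 := by simp [Fin.removeNth]
      rw [map_comp_DeltaIter_succ, ih j (Fin.tail φ) hi, map_comp_DeltaIter_succ, htail, hhead,
        ← LinearMap.map_comp_lTensor, ← LinearMap.comp_assoc, ← LinearMap.comp_assoc, hstep,
        ← LinearMap.rTensor_comp_lTensor]
      simp only [LinearMap.comp_assoc]

end IteratedCoproduct

section DeltaComponents

variable {A : Type*} [Ring A] [HopfAlgebra R A] {n : ℕ}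

/-- The component `δ_S` of `Δⁿ`, with `id - η ∘ ε` applied to the factors in `S` and `η ∘ ε`
to the others. It has values in `H^{⊗n}`, with `1` in the factors outside `S`. -/
noncomputable def deltaOn (S : Finset (Fin n)) : A →ₗ[R] TP A n :=
  PiTensorProduct.map (augPartOn R A S) ∘ₗ DeltaIter A n

theorem deltaOn_univ : deltaOn (Finset.univ : Finset (Fin n)) = deltaN A n := by
  rw [deltaOn, augPartOn, Finset.piecewise_univ]
  rfl

theorem sum_deltaOn (x : A) : ∑ S : Finset (Fin n), deltaOn S x = DeltaIter A n x :=
  sum_map_augPartOn (DeltaIter A n x)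

theorem deltaOn_map_succAbove (i : Fin (n + 1)) (S : Finset (Fin n)) :
    deltaOn (A := A) (S.map i.succAboveEmb) = insertOne i ∘ₗ deltaOn S := by
  have hi : i ∉ S.map i.succAboveEmb := by simp
  have hremove : i.removeNth (augPartOn R A (S.map i.succAboveEmb)) = augPartOn R A S := by
    ext j : 1
    simp [Fin.removeNth, augPartOn, Finset.piecewise]
  rw [deltaOn, map_comp_DeltaIter_eq_insertOne i _ (augPartOn_of_notMem hi), hremove, deltaOn]

theorem deltaN_mul (x y : A) :
    deltaN A n (x * y) =
      ∑ p : Finset (Fin n) × Finset (Fin n) with p.1 ∪ p.2 = Finset.univ,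
        deltaOn p.1 x * deltaOn p.2 y := by
  have hcoproduct : DeltaIter A n (x * y) = DeltaIter A n x * DeltaIter A n y := by
    simp only [← toLinearMap_DeltaIterAlgHom, AlgHom.toLinearMap_apply, map_mul]
  calc
    deltaN A n (x * y) = PiTensorProduct.map (fun _ => augPart R A) (DeltaIter A n (x * y)) := rfl
    _ = ∑ p : Finset (Fin n) × Finset (Fin n),
          PiTensorProduct.map (fun _ => augPart R A) (deltaOn p.1 x * deltaOn p.2 y) := by
      rw [hcoproduct, ← sum_deltaOn x, ← sum_deltaOn y, Fintype.sum_mul_sum,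
        ← Fintype.sum_prod_type', map_sum]
    _ = _ := by
      rw [Finset.sum_filter]
      refine Finset.sum_congr rfl fun p _ => ?_
      split_ifs with hp
      · exact map_augPart_mul_of_union_eq_univ hp _ _
      · exact map_augPart_mul_of_union_ne_univ hp _ _

theorem deltaN_succ_one : deltaN A (n + 1) 1 = 0 := by
  have hcoproduct : DeltaIter A (n + 1) 1 = 1 := by
    simp only [← toLinearMap_DeltaIterAlgHom, AlgHom.toLinearMap_apply, map_one]
  have haug : augPart R A 1 = 0 := by simp [augPart, constPart]
  change PiTensorProduct.map (fun _ => augPart R A) (DeltaIter A (n + 1) 1) = 0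
  rw [hcoproduct, one_def, map_tprod]
  exact MultilinearMap.map_coord_zero _ 0 haug

end DeltaComponents

section DrinfeldTransform

open scoped Pointwise

theorem mul_mem_smul_toSubmodule {K B : Type*} [CommSemiring K] [Semiring B] [Algebra K B]
    {S : Subalgebra K B} {a b : K} {x y : B} (hx : x ∈ a • Subalgebra.toSubmodule S)
    (hy : y ∈ b • Subalgebra.toSubmodule S) : x * y ∈ (a * b) • Subalgebra.toSubmodule S := by
  obtain ⟨x', hx', rfl⟩ := (Submodule.mem_smul_pointwise_iff_exists ..).1 hx
  obtain ⟨y', hy', rfl⟩ := (Submodule.mem_smul_pointwise_iff_exists ..).1 hy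
  rw [smul_mul_smul_comm]
  exact Submodule.smul_mem_pointwise_smul _ _ _ (S.mul_mem hx' hy')

theorem pow_smul_submodule_le {K M : Type*} [CommSemiring K] [AddCommMonoid M] [Module K M]
    (N : Submodule K M) (a : K) {m n : ℕ} (hmn : m ≤ n) : a ^ n • N ≤ a ^ m • N := by
  rw [← Nat.add_sub_of_le hmn, pow_add, mul_smul]
  exact smul_mono_right _ (Submodule.smul_le_self_of_tower _ N)

variable {A : Type*} [Ring A] [HopfAlgebra R A] {n : ℕ}

theorem mem_tgrp_iff_mem_span {p : Fin (n + 1) → Submodule R A} {z : TP A (n + 1)} :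
    z ∈ tgrp A p ↔ z ∈ Submodule.span R (PiTensorProduct.tprod R '' {f | ∀ i, f i ∈ p i}) := by
  constructor
  · intro hz
    suffices h : tgrp A p ≤ (Submodule.span R
        (PiTensorProduct.tprod R '' {f | ∀ i, f i ∈ p i})).toAddSubgroup from h hz
    refine (AddSubgroup.closure_le _).2 ?_
    rintro _ ⟨f, hf, rfl⟩
    exact Submodule.subset_span ⟨f, hf, rfl⟩
  · intro hz
    induction hz using Submodule.closure_induction with
    | zero => exact zero_mem _
    | add x y _ _ hx hy => exact add_mem hx hy
    | smul_mem r x hx =>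
      obtain ⟨f, hf, rfl⟩ := hx
      refine AddSubgroup.subset_closure ⟨Function.update f 0 (r • f 0), fun i => ?_, ?_⟩
      · rcases eq_or_ne i 0 with rfl | hi
        · simpa using (p 0).smul_mem r (hf 0)
        · simpa [hi] using hf i
      · rw [MultilinearMap.map_update_smul, Function.update_eq_self]

/-- The subalgebra `H^{⊗(n-1)} ⊗ C` of `H^{⊗n}`; for `n = 0` it is the whole of `H^{⊗0}`. -/
noncomputable def lastFactorIn (C : Subalgebra R A) (n : ℕ) : Subalgebra R (TP A n) :=
  tensorSubalgebra fun i => if i.val + 1 = n then C else ⊤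

theorem insertOne_mem_lastFactorIn {C : Subalgebra R A} (i : Fin (n + 1)) {z : TP A n}
    (hz : z ∈ lastFactorIn C n) : insertOne i z ∈ lastFactorIn C (n + 1) := by
  refine insertOne_mem_tensorSubalgebra (fun j => ?_) hz
  by_cases hlast : (i.succAbove j).val = n
  · have hle : (i.succAbove j).val ≤ j.val + 1 := by
      rw [Fin.succAbove]
      split_ifs <;> simp
    have hj : j.val + 1 = n := by lia
    rw [if_pos hj, if_pos (congrArg (· + 1) hlast)]
  · rw [if_neg (mt Nat.succ.inj hlast)]
    exact le_top

theorem mem_tgrp_iff_mem_lastFactorIn {C : Subalgebra R A} {z : TP A (n + 1)} :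
    z ∈ tgrp A (fun i => if i = Fin.last n then C.toSubmodule else ⊤) ↔
      z ∈ lastFactorIn C (n + 1) := by
  rw [mem_tgrp_iff_mem_span, ← Subalgebra.mem_toSubmodule, lastFactorIn,
    toSubmodule_tensorSubalgebra]
  have hfamily (i : Fin (n + 1)) (a : A) :
      a ∈ (if i.val + 1 = n + 1 then C else ⊤) ↔
        a ∈ if i = Fin.last n then C.toSubmodule else ⊤ := by
    simp only [Nat.add_right_cancel_iff, Fin.ext_iff, Fin.val_last]
    split_ifs <;> simp
  simp only [hfamily]

theorem mem_Lsh_iff {C : Subalgebra R A} {x : A} :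
    x ∈ Lsh A C.toSubmodule ↔
      x ∈ C ∧ ∀ n, deltaN A n x ∈ (q - 1) ^ n • Subalgebra.toSubmodule (lastFactorIn C n) := by
  refine and_congr_right fun _ => ⟨fun h n => ?_, fun h n => ?_⟩
  · cases n with
    | zero => simp [lastFactorIn, tensorSubalgebra_eq_top_of_isEmpty]
    | succ n =>
      obtain ⟨y, hy, hxy⟩ := h n
      rw [hxy]
      exact Submodule.smul_mem_pointwise_smul _ _ _ (mem_tgrp_iff_mem_lastFactorIn.1 hy)
  · obtain ⟨y, hy, hxy⟩ := (Submodule.mem_smul_pointwise_iff_exists ..).1 (h (n + 1))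
    exact ⟨y, mem_tgrp_iff_mem_lastFactorIn.2 hy, hxy.symm⟩

theorem deltaOn_mem_smul {h : R} {C : Subalgebra R A} {x : A}
    (hx : ∀ n, deltaN A n x ∈ h ^ n • Subalgebra.toSubmodule (lastFactorIn C n))
    (S : Finset (Fin n)) :
    deltaOn S x ∈ h ^ S.card • Subalgebra.toSubmodule (lastFactorIn C n) := by
  induction n with
  | zero =>
    obtain rfl : S = Finset.univ := Subsingleton.elim _ _
    simpa only [deltaOn_univ, Finset.card_univ, Fintype.card_fin] using hx 0
  | succ n ih =>
    by_cases hS : S = Finset.univ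
    · simpa only [hS, deltaOn_univ, Finset.card_univ, Fintype.card_fin] using hx (n + 1)
    obtain ⟨i, hi⟩ : ∃ i, i ∉ S := by simpa [Finset.eq_univ_iff_forall] using hS
    have hrange : S ⊆ Finset.univ.map i.succAboveEmb := fun j hj => by
      simpa using Fin.exists_succAbove_eq (ne_of_mem_of_not_mem hj hi)
    obtain ⟨T, -, rfl⟩ := Finset.subset_map_iff.1 hrange
    obtain ⟨y, hy, hxy⟩ := (Submodule.mem_smul_pointwise_iff_exists ..).1 (ih T)
    rw [deltaOn_map_succAbove, Finset.card_map, LinearMap.comp_apply, ← hxy, map_smul]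
    exact Submodule.smul_mem_pointwise_smul _ _ _ (insertOne_mem_lastFactorIn i hy)

theorem deltaN_mul_mem_smul {h : R} {C : Subalgebra R A} {x y : A}
    (hx : ∀ n, deltaN A n x ∈ h ^ n • Subalgebra.toSubmodule (lastFactorIn C n))
    (hy : ∀ n, deltaN A n y ∈ h ^ n • Subalgebra.toSubmodule (lastFactorIn C n)) (n : ℕ) :
    deltaN A n (x * y) ∈ h ^ n • Subalgebra.toSubmodule (lastFactorIn C n) := by
  rw [deltaN_mul]
  refine Submodule.sum_mem _ fun p hp => ?_
  have hcard : n ≤ p.1.card + p.2.card := by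
    simpa [(Finset.mem_filter.1 hp).2] using Finset.card_union_le p.1 p.2
  have hmem := mul_mem_smul_toSubmodule (deltaOn_mem_smul hx p.1) (deltaOn_mem_smul hy p.2)
  rw [← pow_add] at hmem
  exact pow_smul_submodule_le _ h hcard hmem

theorem Lsh_subset_Hprime (C : Subalgebra R A) : Lsh A C.toSubmodule ⊆ Hprime A := by
  intro x hx n
  obtain ⟨y, -, hxy⟩ :=
    (Submodule.mem_smul_pointwise_iff_exists ..).1 ((mem_Lsh_iff.1 hx).2 n)
  exact ⟨y, hxy.symm⟩

theorem one_mem_Lsh (C : Subalgebra R A) : (1 : A) ∈ Lsh A C.toSubmodule :=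
  ⟨C.one_mem, fun _ => ⟨0, zero_mem _, by rw [deltaN_succ_one, smul_zero]⟩⟩

theorem mul_mem_Lsh {C : Subalgebra R A} {x y : A} (hx : x ∈ Lsh A C.toSubmodule)
    (hy : y ∈ Lsh A C.toSubmodule) : x * y ∈ Lsh A C.toSubmodule := by
  rw [mem_Lsh_iff] at hx hy ⊢
  exact ⟨C.mul_mem hx.1 hy.1, deltaN_mul_mem_smul hx.2 hy.2⟩

theorem Lsh_subalgebra_of_Hprime_general (C : Subalgebra R A) :
    ∃ S : Subalgebra R A, (S : Set A) = Lsh A C.toSubmodule ∧ (S : Set A) ⊆ Hprime A := by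
  let L : Submodule R A := C.toSubmodule ⊓
    ⨅ n, ((q - 1) ^ n • Subalgebra.toSubmodule (lastFactorIn C n)).comap (deltaN A n)
  have hL (x : A) : x ∈ L ↔ x ∈ Lsh A C.toSubmodule := by simp [L, mem_Lsh_iff]
  refine ⟨L.toSubalgebra ((hL 1).2 (one_mem_Lsh C)) fun x y hx hy => ?_, ?_, ?_⟩
  · exact (hL _).2 (mul_mem_Lsh ((hL x).1 hx) ((hL y).1 hy))
  · exact Set.ext hL
  · exact fun x hx => Lsh_subset_Hprime C ((hL x).1 hx)

end DrinfeldTransform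

/-- If `C_q` is a unital subalgebra and left coideal of `H`, then
    `C_q^Lsh` is a unital subalgebra of `H'`. -/
theorem Lsh_subalgebra_of_Hprime (C : Subalgebra R H)
    (hC : ∀ c ∈ C, Coalgebra.comul (R := R) c ∈ tsub H ⊤ C.toSubmodule) :
    Lsh H C.toSubmodule ⊆ Hprime H ∧
    (1 : H) ∈ Lsh H C.toSubmodule ∧
    (∀ x ∈ Lsh H C.toSubmodule, ∀ y ∈ Lsh H C.toSubmodule, x * y ∈ Lsh H C.toSubmodule) := by
  obtain ⟨S, hS, hle⟩ := Lsh_subalgebra_of_Hprime_general C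
  rw [← hS]
  exact ⟨hle, S.one_mem, fun _ hx _ hy => S.mul_mem hx hy⟩

end GQDP
end

section
/- Let H' be a torsion-free algebra over C[q,q⁻¹] embedded (as in the strict case) inside a torsion-free Hopf algebra H via H' = { η ∈ H | δ_n(η) ∈ (q−1)ⁿH^{⊗n} ∀n ∈ ℕ }. Suppose a ∈ H' satisfies ε(a) = 0 and a² ≡ a mod (q−1)H'. Then a ≡ 0 mod (q−1)H'. -/
/- STATEMENT 19: in H' = { a ∈ H | δ_n(a) ∈ (q−1)ⁿH^{⊗n} ∀n } inside a torsion-free Hopf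
   algebra H over ℂ[q,q⁻¹]: if a ∈ H' satisfies ε(a) = 0 and a² ≡ a mod (q−1)H', then
   a ≡ 0 mod (q−1)H'. -/

open scoped TensorProduct
open PiTensorProduct

namespace GQDP

variable (H : Type*) [Ring H] [HopfAlgebra R H] [NoZeroSMulDivisors R H]

/-! Expanding `Δⁿ(ab) = Δⁿ(a) Δⁿ(b)` along `id = (id - η ∘ ε) + η ∘ ε` in every tensor slot gives
`δ_n(ab) = ∑_{Λ ∪ Y = {1, …, n}} δ_Λ(a) δ_Y(b)`, where `δ_Λ` inherits every divisibility of
`δ_{|Λ|}`. Let `t = q - 1` and `a, b ∈ H'` with `ε(b) = 0`. The terms with `Y = ∅` vanish, and in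
the others `δ_Λ(a) δ_Y(b)` is divisible by `t ^ (|Λ| + |Y|)`, where `|Λ| + |Y| ≥ n`. Either
`|Λ| = n` and `|Y| ≥ 1` contributes one more factor `t`, or `|Λ| < n` and this factor comes from
`δ_Λ(a)` as soon as `δ_m(a)` is divisible by `t ^ (m + 1)` for all `m < n`. With `b = a = a² - tc`,
induction on `n` shows that `δ_n(a)` is divisible by `t ^ (n + 1)` for all `n`. Since `ε(a) = 0`,
`δ_1(a)` is `a` itself, so `a = td`; cancelling `t` in the tensor powers, which are flat, gives
`d ∈ H'`. -/

open scoped Pointwise nonZeroDivisors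
open Coalgebra (comul counit)

section TensorPower

variable (k : Type*) [CommSemiring k]

/-- The canonical isomorphism `M ⊗ M^{⊗n} ≃ M^{⊗(n+1)}`. -/
noncomputable def tensorConsEquiv (M : Type*) [AddCommMonoid M] [Module k M] (n : ℕ) :
    M ⊗[k] ⨂[k]^n M ≃ₗ[k] ⨂[k]^(n + 1) M :=
  LinearEquiv.rTensor (⨂[k]^n M)
      (subsingletonEquiv (0 : Fin 1) : (⨂[k] (_ : Fin 1), M) ≃ₗ[k] M).symm ≪≫ₗ
    tmulEquiv k M ≪≫ₗ
    reindex k (fun _ ↦ M) (finSumFinEquiv.trans (finCongr (Nat.add_comm 1 n)))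

variable {k} {M : Type*} [AddCommMonoid M] [Module k M] {n : ℕ}

@[simp]
theorem tensorConsEquiv_tmul_tprod (x : M) (f : Fin n → M) :
    tensorConsEquiv k M n (x ⊗ₜ tprod k f) = tprod k (Fin.cons x f : Fin (n + 1) → M) := by
  let e : Fin 1 ⊕ Fin n ≃ Fin (n + 1) := finSumFinEquiv.trans (finCongr (Nat.add_comm 1 n))
  have e_symm_zero : e.symm 0 = Sum.inl 0 := by
    rw [Equiv.symm_apply_eq]; ext; simp [e]
  have e_symm_succ (i : Fin n) : e.symm i.succ = Sum.inr i := by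
    rw [Equiv.symm_apply_eq]; ext; simp [e]
  have reindex_sumElim : reindex k (fun _ ↦ M) e
      (tprod k (Sum.elim (fun _ ↦ x) f)) = tprod k (Fin.cons x f : Fin (n + 1) → M) := by
    rw [reindex_tprod]
    congr 1
    ext i
    cases i using Fin.cases <;> simp [e_symm_zero, e_symm_succ]
  simp only [tensorConsEquiv, LinearEquiv.trans_apply, LinearEquiv.rTensor_tmul,
    subsingletonEquiv_symm_apply', tmulEquiv_apply]
  exact reindex_sumElim

theorem map_tensorConsEquiv (f : Fin (n + 1) → M →ₗ[k] M) (z : M ⊗[k] ⨂[k]^n M) :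
    map f (tensorConsEquiv k M n z) =
      tensorConsEquiv k M n (TensorProduct.map (f 0) (map fun i ↦ f i.succ) z) := by
  have : map f ∘ₗ (tensorConsEquiv k M n).toLinearMap =
      (tensorConsEquiv k M n).toLinearMap ∘ₗ TensorProduct.map (f 0) (map fun i ↦ f i.succ) := by
    ext x y
    simp only [LinearMap.compMultilinearMap_apply, TensorProduct.AlgebraTensorModule.curry_apply,
      TensorProduct.curry_apply, LinearMap.restrictScalars_self, LinearMap.coe_comp,
      LinearEquiv.coe_coe, Function.comp_apply, tensorConsEquiv_tmul_tprod, map_tprod,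
      TensorProduct.map_tmul]
    congr 1
    ext i
    cases i using Fin.cases <;> simp
  exact LinearMap.congr_fun this z

theorem flat_tensorPower [Module.Flat k M] (n : ℕ) : Module.Flat k (⨂[k]^n M) := by
  induction n with
  | zero => exact .of_linearEquiv (isEmptyEquiv (Fin 0))
  | succ n ih => exact .of_linearEquiv (tensorConsEquiv k M n).symm

theorem isEmptyEquiv_symm_apply {ι A : Type*} [IsEmpty ι] [Semiring A] [Algebra k A] (r : k) :
    (isEmptyEquiv ι).symm r = algebraMap k (⨂[k] _ : ι, A) r := by
  rw [LinearEquiv.symm_apply_eq, Algebra.algebraMap_eq_smul_one, map_smul, one_def,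
    isEmptyEquiv_apply_tprod, smul_eq_mul, mul_one]

theorem tensorConsEquiv_mul_tmul {A : Type*} [Semiring A] [Algebra k A] (x y : A)
    (u v : ⨂[k]^n A) : tensorConsEquiv k A n ((x * y) ⊗ₜ (u * v)) =
      tensorConsEquiv k A n (x ⊗ₜ u) * tensorConsEquiv k A n (y ⊗ₜ v) := by
  induction u using PiTensorProduct.induction_on with
  | add u u' hu hu' => simp only [add_mul, TensorProduct.tmul_add, map_add, hu, hu']
  | smul_tprod r f =>
  induction v using PiTensorProduct.induction_on with
  | add v v' hv hv' => simp only [mul_add, TensorProduct.tmul_add, map_add, hv, hv']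
  | smul_tprod s g =>
    simp only [smul_tprod_mul_smul_tprod, TensorProduct.tmul_smul, map_smul,
      tensorConsEquiv_tmul_tprod]
    congr 2
    ext i
    cases i using Fin.cases <;> simp

variable (k) in
/-- The isomorphism `tensorConsEquiv` for an algebra. -/
noncomputable def tensorConsAlgEquiv (A : Type*) [Semiring A] [Algebra k A] (n : ℕ) :
    A ⊗[k] ⨂[k]^n A ≃ₐ[k] ⨂[k]^(n + 1) A :=
  Algebra.TensorProduct.algEquivOfLinearEquivTensorProduct (tensorConsEquiv k A n)
    tensorConsEquiv_mul_tmul <| by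
      rw [one_def, one_def, tensorConsEquiv_tmul_tprod]
      congr 1
      ext i
      cases i using Fin.cases <;> simp

end TensorPower

section Divisibility

variable {k : Type*} [CommSemiring k] {M N : Type*} [AddCommMonoid M] [Module k M]
  [AddCommMonoid N] [Module k N]

theorem mem_smul_top_iff {r : k} {x : M} : x ∈ r • (⊤ : Submodule k M) ↔ ∃ y, x = r • y := by
  simp [Submodule.mem_smul_pointwise_iff_exists, eq_comm]

theorem map_mem_smul_top (φ : M →ₗ[k] N) {r : k} {x : M} (hx : x ∈ r • (⊤ : Submodule k M)) :
    φ x ∈ r • (⊤ : Submodule k N) := by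
  obtain ⟨y, rfl⟩ := mem_smul_top_iff.1 hx
  exact mem_smul_top_iff.2 ⟨φ y, map_smul φ r y⟩

theorem mul_mem_pow_smul_top {A : Type*} [Semiring A] [Algebra k A] {t : k} {i j m : ℕ}
    (hm : m ≤ i + j) {x y : A} (hx : x ∈ t ^ i • (⊤ : Submodule k A))
    (hy : y ∈ t ^ j • (⊤ : Submodule k A)) : x * y ∈ t ^ m • (⊤ : Submodule k A) := by
  obtain ⟨x, rfl⟩ := mem_smul_top_iff.1 hx
  obtain ⟨y, rfl⟩ := mem_smul_top_iff.1 hy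
  refine mem_smul_top_iff.2 ⟨t ^ (i + j - m) • (x * y), ?_⟩
  rw [smul_mul_smul_comm, smul_smul, ← pow_add, ← pow_add, Nat.add_sub_cancel' hm]

end Divisibility

section IteratedCoproduct

variable (k A : Type*) [CommSemiring k] [Semiring A] [Bialgebra k A]

/-- The projection `η ∘ ε` of a bialgebra onto its scalars. -/
noncomputable def unitProj : A →ₗ[k] A := Algebra.linearMap k A ∘ₗ counit

/-- The iterated coproduct `Δⁿ : A → A^{⊗n}`, with `Δ⁰ = ε` and `Δⁿ⁺¹ = (id ⊗ Δⁿ) ∘ Δ`. -/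
noncomputable def comulIter : (n : ℕ) → A →ₐ[k] ⨂[k]^n A
  | 0 => (Algebra.ofId k _).comp (Bialgebra.counitAlgHom k A)
  | n + 1 => (tensorConsAlgEquiv k A n : _ →ₐ[k] _).comp <|
      (Algebra.TensorProduct.map (.id k A) (comulIter n)).comp (Bialgebra.comulAlgHom k A)

variable {k A} {n : ℕ}

theorem unitProj_apply (a : A) : unitProj k A a = algebraMap k A (counit a) := rfl

theorem map_unitProj_comp_comul {N : Type*} [AddCommMonoid N] [Module k N] (φ : A →ₗ[k] N) :
    TensorProduct.map (unitProj k A) φ ∘ₗ comul = TensorProduct.mk k A N 1 ∘ₗ φ := by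
  rw [unitProj, ← LinearMap.map_comp_rTensor, LinearMap.comp_assoc,
    Coalgebra.rTensor_counit_comp_comul]
  ext a
  simp

theorem comulIter_zero_apply (a : A) :
    comulIter k A 0 a = algebraMap k (⨂[k]^0 A) (counit a) := rfl

theorem comulIter_succ_apply (a : A) : comulIter k A (n + 1) a =
    tensorConsEquiv k A n ((comulIter k A n).toLinearMap.lTensor A (comul a)) := rfl

theorem map_comp_comulIter_succ (f : Fin (n + 1) → A →ₗ[k] A) :
    map f ∘ₗ (comulIter k A (n + 1)).toLinearMap =
      (tensorConsEquiv k A n).toLinearMap ∘ₗ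
        TensorProduct.map (f 0) (map (fun i ↦ f i.succ) ∘ₗ (comulIter k A n).toLinearMap) ∘ₗ
          comul := by
  ext a
  rw [← LinearMap.map_comp_lTensor, LinearMap.comp_apply, AlgHom.toLinearMap_apply,
    comulIter_succ_apply, map_tensorConsEquiv]
  rfl

end IteratedCoproduct

section DrinfeldPrime

variable (k A : Type*) [CommRing k] [Ring A] [Bialgebra k A]

/-- The projection `id - η ∘ ε` of a bialgebra onto its augmentation ideal `ker ε`. -/
noncomputable def augProj : A →ₗ[k] A := LinearMap.id - unitProj k A

/-- Drinfeld's map `δ_n = (id - η ∘ ε)^{⊗n} ∘ Δⁿ`. -/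
noncomputable def delta (n : ℕ) : A →ₗ[k] ⨂[k]^n A :=
  map (fun _ ↦ augProj k A) ∘ₗ (comulIter k A n).toLinearMap

/-- The projection used by `δ_Λ` in each tensor slot: `id - η ∘ ε` in the slots of `Λ = s` and
`η ∘ ε` in the others. -/
noncomputable def slotProj {ι : Type*} [DecidableEq ι] (s : Finset ι) : ι → A →ₗ[k] A :=
  s.piecewise (fun _ ↦ augProj k A) fun _ ↦ unitProj k A

/-- Drinfeld's map `δ_Λ = j_Λ ∘ δ_{|Λ|}` of a subset `Λ ⊆ {1, …, n}`, where `j_Λ` inserts `1` in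
the tensor slots outside `Λ`. It is encoded without `j_Λ`, by applying `id - η ∘ ε` in the slots
of `Λ` and `η ∘ ε` in the others; `exists_deltaSubset_eq_comp_delta` recovers `j_Λ`. -/
noncomputable def deltaSubset {n : ℕ} (s : Finset (Fin n)) : A →ₗ[k] ⨂[k]^n A :=
  map (slotProj k A s) ∘ₗ (comulIter k A n).toLinearMap

/-- Drinfeld's `A' = {a | δ_n(a) ∈ tⁿ A^{⊗n} for all n}`, at a scalar `t` of the base
ring. -/
noncomputable def drinfeldPrime (t : k) : Submodule k A :=
  ⨅ n, (t ^ n • (⊤ : Submodule k (⨂[k]^n A))).comap (delta k A n)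

variable {k A} {n : ℕ}

theorem augProj_apply (a : A) : augProj k A a = a - algebraMap k A (counit a) := rfl

theorem counit_augProj (a : A) : counit (R := k) (augProj k A a) = 0 := by
  simp [augProj_apply]

theorem augProj_eq_self {a : A} (ha : counit (R := k) a = 0) : augProj k A a = a := by
  simp [augProj_apply, ha]

theorem augProj_algebraMap (r : k) : augProj k A (algebraMap k A r) = 0 := by
  simp [augProj_apply]

theorem augProj_add_unitProj : augProj k A + unitProj k A = LinearMap.id := sub_add_cancel _ _

theorem slotProj_of_mem {ι : Type*} [DecidableEq ι] {s : Finset ι} {i : ι} (hi : i ∈ s) :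
    slotProj k A s i = augProj k A :=
  Finset.piecewise_eq_of_mem _ _ _ hi

theorem slotProj_of_notMem {ι : Type*} [DecidableEq ι] {s : Finset ι} {i : ι} (hi : i ∉ s) :
    slotProj k A s i = unitProj k A :=
  Finset.piecewise_eq_of_notMem _ _ _ hi

theorem slotProj_succ (s : Finset (Fin (n + 1))) (i : Fin n) :
    slotProj k A s i.succ = slotProj k A ({i | i.succ ∈ s} : Finset (Fin n)) i := by
  simp [slotProj, Finset.piecewise]

theorem augProj_slotProj_mul_slotProj {ι : Type*} [DecidableEq ι] (s s' : Finset ι) (i : ι)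
    (a b : A) :
    augProj k A (slotProj k A s i a * slotProj k A s' i b) =
      if i ∈ s ∪ s' then slotProj k A s i a * slotProj k A s' i b else 0 := by
  split_ifs with hi
  · apply augProj_eq_self
    rw [Bialgebra.counit_mul]
    rcases Finset.mem_union.1 hi with hi | hi <;> simp [slotProj_of_mem hi, counit_augProj]
  · obtain ⟨hs, hs'⟩ := Finset.notMem_union.1 hi
    rw [slotProj_of_notMem hs, slotProj_of_notMem hs', unitProj_apply, unitProj_apply, ← map_mul,
      augProj_algebraMap]

theorem mem_drinfeldPrime {t : k} {a : A} :
    a ∈ drinfeldPrime k A t ↔ ∀ n, delta k A n a ∈ t ^ n • (⊤ : Submodule k (⨂[k]^n A)) := by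
  simp [drinfeldPrime]

theorem delta_apply (a : A) : delta k A n a = map (fun _ ↦ augProj k A) (comulIter k A n a) := rfl

theorem deltaSubset_apply (s : Finset (Fin n)) (a : A) :
    deltaSubset k A s a = map (slotProj k A s) (comulIter k A n a) := rfl

theorem deltaSubset_univ : deltaSubset k A (Finset.univ : Finset (Fin n)) = delta k A n := by
  rw [deltaSubset, slotProj, Finset.piecewise_univ, delta]

theorem delta_zero_apply (a : A) : delta k A 0 a = algebraMap k _ (counit a) := by
  rw [delta_apply, comulIter_zero_apply, Algebra.algebraMap_eq_smul_one, map_smul, one_def,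
    map_tprod]
  congr 2
  exact Subsingleton.elim _ _

theorem delta_succ : delta k A (n + 1) =
    (tensorConsEquiv k A n).toLinearMap ∘ₗ TensorProduct.map (augProj k A) (delta k A n) ∘ₗ
      comul :=
  map_comp_comulIter_succ _

theorem delta_one_apply (a : A) : delta k A 1 a = tprod k fun _ ↦ augProj k A a := by
  have delta_zero : delta k A 0 = Algebra.linearMap k (⨂[k]^0 A) ∘ₗ counit :=
    LinearMap.ext delta_zero_apply
  rw [delta_succ, delta_zero, ← LinearMap.map_comp_lTensor, LinearMap.comp_assoc,
    Coalgebra.lTensor_counit_comp_comul]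
  simp only [LinearMap.comp_apply, LinearMap.flip_apply, TensorProduct.mk_apply,
    TensorProduct.map_tmul, Algebra.linearMap_apply, map_one, one_def, LinearEquiv.coe_coe,
    tensorConsEquiv_tmul_tprod]
  congr 1
  ext i
  rw [Fin.fin_one_eq_zero i, Fin.cons_zero]

theorem comulIter_eq_sum_deltaSubset (a : A) :
    comulIter k A n a = ∑ s : Finset (Fin n), deltaSubset k A s a := by
  have map_add_univ := (mapMultilinear k (fun _ : Fin n ↦ A) fun _ ↦ A).map_add_univ
    (fun _ ↦ augProj k A) (fun _ ↦ unitProj k A)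
  simp only [Pi.add_def, augProj_add_unitProj, mapMultilinear_apply, map_id] at map_add_univ
  exact (LinearMap.congr_fun map_add_univ _).trans (LinearMap.sum_apply _ _ _)

theorem map_augProj_mul_map_slotProj (s s' : Finset (Fin n)) (x y : ⨂[k]^n A) :
    map (fun _ ↦ augProj k A) (map (slotProj k A s) x * map (slotProj k A s') y) =
      if s ∪ s' = .univ then map (slotProj k A s) x * map (slotProj k A s') y else 0 := by
  induction x using PiTensorProduct.induction_on with
  | add x x' hx hx' => rw [map_add, add_mul, map_add, hx, hx', ite_add_ite, add_zero]
  | smul_tprod r f =>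
  induction y using PiTensorProduct.induction_on with
  | add y y' hy hy' => rw [map_add, mul_add, map_add, hy, hy', ite_add_ite, add_zero]
  | smul_tprod r' g =>
    simp only [map_smul, map_tprod, smul_tprod_mul_smul_tprod, Pi.mul_apply,
      augProj_slotProj_mul_slotProj]
    split_ifs with hunion
    · simp only [hunion, Finset.mem_univ, if_true]
      rfl
    · obtain ⟨i, hi⟩ : ∃ i, i ∉ s ∪ s' := by simpa [Finset.eq_univ_iff_forall] using hunion
      rw [MultilinearMap.map_coord_zero _ i (if_neg hi), smul_zero]

theorem delta_mul (a b : A) : delta k A n (a * b) =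
    ∑ s : Finset (Fin n), ∑ s' with s ∪ s' = .univ, deltaSubset k A s a * deltaSubset k A s' b := by
  rw [delta_apply, map_mul, comulIter_eq_sum_deltaSubset, comulIter_eq_sum_deltaSubset]
  simp only [Finset.sum_mul_sum, map_sum, deltaSubset_apply, map_augProj_mul_map_slotProj,
    Finset.sum_filter]

theorem deltaSubset_of_zero_mem {s : Finset (Fin (n + 1))} (h0 : 0 ∈ s) :
    deltaSubset k A s = (tensorConsEquiv k A n).toLinearMap ∘ₗ
      TensorProduct.map (augProj k A) (deltaSubset k A ({i | i.succ ∈ s} : Finset (Fin n))) ∘ₗ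
        comul := by
  simp only [deltaSubset, map_comp_comulIter_succ, slotProj_of_mem h0, slotProj_succ]

theorem deltaSubset_of_zero_notMem {s : Finset (Fin (n + 1))} (h0 : 0 ∉ s) :
    deltaSubset k A s = (tensorConsEquiv k A n).toLinearMap ∘ₗ TensorProduct.mk k A _ 1 ∘ₗ
      deltaSubset k A ({i | i.succ ∈ s} : Finset (Fin n)) := by
  simp only [deltaSubset, map_comp_comulIter_succ, slotProj_of_notMem h0, slotProj_succ,
    map_unitProj_comp_comul]

theorem exists_deltaSubset_eq_comp_delta (s : Finset (Fin n)) :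
    ∃ j : ⨂[k]^s.card A →ₗ[k] ⨂[k]^n A, deltaSubset k A s = j ∘ₗ delta k A s.card := by
  suffices ∀ m, s.card = m →
      ∃ j : ⨂[k]^m A →ₗ[k] ⨂[k]^n A, deltaSubset k A s = j ∘ₗ delta k A m from this _ rfl
  induction n with
  | zero =>
    rintro _ rfl
    obtain rfl : s = .univ := Subsingleton.elim _ _
    exact ⟨.id, deltaSubset_univ⟩
  | succ n ih =>
    rintro _ rfl
    obtain ⟨j, hj⟩ := ih {i | i.succ ∈ s} _ rfl
    have card_eq := Fin.card_filter_univ_succ (· ∈ s)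
    rw [Finset.filter_univ_mem] at card_eq
    by_cases h0 : 0 ∈ s
    · rw [if_pos h0] at card_eq
      rw [card_eq, deltaSubset_of_zero_mem h0, hj, delta_succ]
      refine ⟨(tensorConsEquiv k A n).toLinearMap ∘ₗ j.lTensor A ∘ₗ
        (tensorConsEquiv k A _).symm.toLinearMap, ?_⟩
      rw [← LinearMap.lTensor_comp_map]
      ext a
      simp
    · rw [if_neg h0] at card_eq
      rw [card_eq, deltaSubset_of_zero_notMem h0, hj]
      exact ⟨(tensorConsEquiv k A n).toLinearMap ∘ₗ TensorProduct.mk k A _ 1 ∘ₗ j, rfl⟩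

theorem deltaSubset_mem_smul_top {r : k} {a : A} {s : Finset (Fin n)}
    (h : delta k A s.card a ∈ r • (⊤ : Submodule k (⨂[k]^s.card A))) :
    deltaSubset k A s a ∈ r • (⊤ : Submodule k (⨂[k]^n A)) := by
  obtain ⟨j, hj⟩ := exists_deltaSubset_eq_comp_delta (k := k) (A := A) s
  rw [hj]
  exact map_mem_smul_top j h

theorem deltaSubset_empty_apply {a : A} (ha : counit (R := k) a = 0) :
    deltaSubset k A (∅ : Finset (Fin n)) a = 0 := by
  obtain ⟨j, hj⟩ := exists_deltaSubset_eq_comp_delta (k := k) (A := A) (∅ : Finset (Fin n))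
  have delta_card : delta k A (∅ : Finset (Fin n)).card a = 0 := by
    rw [Finset.card_empty, delta_zero_apply, ha, map_zero]
  rw [hj, LinearMap.comp_apply, delta_card, map_zero]

theorem delta_mul_mem_pow_succ_smul_top {t : k} {a b : A} (ha : a ∈ drinfeldPrime k A t)
    (hb : b ∈ drinfeldPrime k A t) (hb0 : counit (R := k) b = 0)
    (ih : ∀ m < n, delta k A m a ∈ t ^ (m + 1) • (⊤ : Submodule k (⨂[k]^m A))) :
    delta k A n (a * b) ∈ t ^ (n + 1) • (⊤ : Submodule k (⨂[k]^n A)) := by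
  rw [mem_drinfeldPrime] at ha hb
  rw [delta_mul]
  refine Submodule.sum_mem _ fun s _ ↦ Submodule.sum_mem _ fun s' hs' ↦ ?_
  obtain rfl | s'_nonempty := s'.eq_empty_or_nonempty
  · simp [deltaSubset_empty_apply hb0]
  have card_union : n ≤ s.card + s'.card := by
    simpa [(Finset.mem_filter.1 hs').2] using Finset.card_union_le s s'
  have card_pos : 0 < s'.card := s'_nonempty.card_pos
  have deltaSubset_b := deltaSubset_mem_smul_top (hb s'.card)
  obtain card_lt | card_ge := lt_or_ge s.card n
  · exact mul_mem_pow_smul_top (by lia) (deltaSubset_mem_smul_top (ih _ card_lt)) deltaSubset_b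
  · exact mul_mem_pow_smul_top (by lia) (deltaSubset_mem_smul_top (ha _)) deltaSubset_b

theorem delta_mem_pow_succ_smul_top {t : k} {a : A} (ha : a ∈ drinfeldPrime k A t)
    (ha0 : counit (R := k) a = 0) (hidem : a * a - a ∈ t • drinfeldPrime k A t) (n : ℕ) :
    delta k A n a ∈ t ^ (n + 1) • (⊤ : Submodule k (⨂[k]^n A)) := by
  induction n using Nat.strong_induction_on with
  | _ n ih =>
    obtain ⟨c, hc, hac⟩ := (Submodule.mem_smul_pointwise_iff_exists _ _ _).1 hidem
    have delta_a : delta k A n a = delta k A n (a * a) - t • delta k A n c := by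
      rw [← map_smul, hac, map_sub, sub_sub_cancel]
    rw [delta_a, pow_succ', mul_smul]
    refine Submodule.sub_mem _ ?_
      (Submodule.smul_mem_pointwise_smul _ _ _ (mem_drinfeldPrime.1 hc n))
    rw [← mul_smul, ← pow_succ']
    exact delta_mul_mem_pow_succ_smul_top ha ha ha0 ih

theorem mem_smul_top_of_delta_one_mem {r : k} {a : A} (ha0 : counit (R := k) a = 0)
    (h : delta k A 1 a ∈ r • (⊤ : Submodule k (⨂[k]^1 A))) : a ∈ r • (⊤ : Submodule k A) := by
  have := map_mem_smul_top
    (subsingletonEquiv (0 : Fin 1) : (⨂[k] (_ : Fin 1), A) ≃ₗ[k] A).toLinearMap h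
  simpa [delta_one_apply, augProj_eq_self ha0] using this

theorem mem_smul_drinfeldPrime [Module.Flat k A] {t : k} (ht : t ∈ k⁰) {a : A}
    (ha0 : counit (R := k) a = 0)
    (h : ∀ n, delta k A n a ∈ t ^ (n + 1) • (⊤ : Submodule k (⨂[k]^n A))) :
    a ∈ t • drinfeldPrime k A t := by
  have delta_one_mem : delta k A 1 a ∈ t • (⊤ : Submodule k (⨂[k]^1 A)) := by
    obtain ⟨y, hy⟩ := mem_smul_top_iff.1 (h 1)
    exact mem_smul_top_iff.2 ⟨t • y, by rw [hy, pow_two, mul_smul]⟩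
  obtain ⟨d, rfl⟩ := mem_smul_top_iff.1 (mem_smul_top_of_delta_one_mem ha0 delta_one_mem)
  refine Submodule.smul_mem_pointwise_smul _ _ _ (mem_drinfeldPrime.2 fun n ↦ ?_)
  obtain ⟨y, hy⟩ := mem_smul_top_iff.1 (h n)
  have := flat_tensorPower (k := k) (M := A) n
  refine mem_smul_top_iff.2 ⟨y, Module.Flat.isSMulRegular_of_nonZeroDivisors ht ?_⟩
  change t • delta k A n d = t • t ^ n • y
  rw [← map_smul, hy, pow_succ', mul_smul]

theorem idempotent_in_Hprime_general [Module.Flat k A] {t : k} (ht : t ∈ k⁰) {a : A}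
    (ha : a ∈ drinfeldPrime k A t) (ha0 : counit (R := k) a = 0)
    (hidem : a * a - a ∈ t • drinfeldPrime k A t) : a ∈ t • drinfeldPrime k A t :=
  mem_smul_drinfeldPrime ht ha0 (delta_mem_pow_succ_smul_top ha ha0 hidem)

end DrinfeldPrime

theorem isDedekindDomain_laurentPolynomial (K : Type*) [Field K] :
    IsDedekindDomain (LaurentPolynomial K) :=
  IsLocalization.isDedekindDomain (Polynomial K) (M := .powers Polynomial.X)
    (powers_le_nonZeroDivisors_of_noZeroDivisors Polynomial.X_ne_zero) _

theorem q_sub_one_ne_zero : q - 1 ≠ 0 := by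
  rw [sub_ne_zero, q, ← LaurentPolynomial.T_zero]
  intro h
  have degree_eq := congrArg LaurentPolynomial.degree h
  rw [LaurentPolynomial.degree_T, LaurentPolynomial.degree_T] at degree_eq
  exact one_ne_zero (WithBot.coe_injective degree_eq)

section Specialization

variable {H : Type*} [Ring H] [HopfAlgebra R H]

theorem DeltaIter_eq_comulIter (n : ℕ) : DeltaIter H n = (comulIter R H n).toLinearMap := by
  induction n with
  | zero =>
    ext a
    exact isEmptyEquiv_symm_apply _
  | succ n ih =>
    rw [DeltaIter, ih]
    rfl

theorem deltaN_eq_delta (n : ℕ) : deltaN H n = delta R H n := by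
  rw [deltaN, DeltaIter_eq_comulIter]
  rfl

theorem mem_Hprime_iff {a : H} : a ∈ Hprime H ↔ a ∈ drinfeldPrime R H (q - 1) := by
  simp only [Hprime, deltaN_eq_delta, Set.mem_ofPred_eq, mem_drinfeldPrime, mem_smul_top_iff]

theorem exists_mem_Hprime_eq_smul_iff {a : H} :
    (∃ c ∈ Hprime H, a = (q - 1) • c) ↔ a ∈ (q - 1) • drinfeldPrime R H (q - 1) := by
  simp only [mem_Hprime_iff, Submodule.mem_smul_pointwise_iff_exists, eq_comm]

end Specialization

/-- An idempotent-mod-(q−1) element of `H'` with vanishing counit is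
    divisible by `(q−1)` within `H'`. -/
theorem idempotent_in_Hprime (a : H)
    (ha : a ∈ Hprime H)
    (haeps : Coalgebra.counit (R := R) a = 0)
    (hidem : ∃ c ∈ Hprime H, a * a - a = (q - 1) • c) :
    ∃ d ∈ Hprime H, a = (q - 1) • d := by
  have := isDedekindDomain_laurentPolynomial ℂ
  rw [exists_mem_Hprime_eq_smul_iff] at hidem ⊢
  exact idempotent_in_Hprime_general (mem_nonZeroDivisors_of_ne_zero q_sub_one_ne_zero)
    (mem_Hprime_iff.1 ha) haeps hidem

end GQDP
end
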